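/- arXiv:1608.07010 — 3 statements merged into one kernel-verified Lean document; each statement's English description precedes it below -/
import Mathlib

section
/- For every δ ∈ (0, 1/100] there exists a function ω₀ : ℝ² → ℝ of class C¹ which is 2-periodic in each variable, is odd in x₁ (ω₀(−x₁,x₂) = −ω₀(x₁,x₂)) and odd in x₂ (ω₀(x₁,−x₂) = −ω₀(x₁,x₂)), satisfies 0 ≤ ω₀ ≤ 1 on [0,1]², ω₀ = 1 on [δ, 1−δ]², ω₀(s,s) = s / log(−log s) for every s ∈ (0, δ/2], and ‖∇ω₀‖_{L∞} ≤ 20/δ. -/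
open Real Set

namespace Aux

/-- primitive of a continuous function -/
noncomputable def prim (d : ℝ → ℝ) (x : ℝ) : ℝ := ∫ t in (0:ℝ)..x, d t

lemma prim_hasDerivAt {d : ℝ → ℝ} (hd : Continuous d) (x : ℝ) : HasDerivAt (prim d) (d x) x :=
  (hd.integral_hasStrictDerivAt 0 x).hasDerivAt

lemma prim_contDiff {d : ℝ → ℝ} (hd : Continuous d) : ContDiff ℝ 1 (prim d) := by
  rw [contDiff_one_iff_deriv]
  refine ⟨fun x => (prim_hasDerivAt hd x).differentiableAt, ?_⟩
  have : deriv (prim d) = d := funext fun x => (prim_hasDerivAt hd x).deriv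
  rwa [this]

lemma prim_neg {d : ℝ → ℝ} (he : ∀ t, d (-t) = d t) (x : ℝ) : prim d (-x) = -prim d x := by
  unfold prim
  have h := intervalIntegral.integral_comp_neg (a := 0) (b := x) d
  simp only [he, neg_zero] at h
  rw [h, intervalIntegral.integral_symm]

lemma prim_mono {d : ℝ → ℝ} (hd : Continuous d) (h0 : ∀ t, 0 ≤ d t) : Monotone (prim d) := by
  apply monotone_of_deriv_nonneg
  · exact fun x => (prim_hasDerivAt hd x).differentiableAt
  · intro x; rw [(prim_hasDerivAt hd x).deriv]; exact h0 x

/-- density for N -/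
noncomputable def dn (v : ℝ) : ℝ := (1 / π) * (1 / √(1 - min (v ^ 2) (1 / 4)))

lemma dn_pos_aux (v : ℝ) : 3 / 4 ≤ 1 - min (v ^ 2) (1 / 4) := by
  have := min_le_right (v ^ 2) (1 / 4); linarith

lemma dn_cont : Continuous dn := by
  unfold dn
  refine continuous_const.mul (continuous_const.div (by fun_prop) ?_)
  intro v
  have := dn_pos_aux v
  exact (Real.sqrt_pos.2 (by linarith)).ne'

lemma dn_nonneg (v : ℝ) : 0 ≤ dn v := by unfold dn; positivity

lemma dn_le (v : ℝ) : π * dn v ≤ 2 := by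
  unfold dn
  have h1 : (1/2 : ℝ) ≤ √(1 - min (v ^ 2) (1 / 4)) := by
    apply Real.le_sqrt_of_sq_le
    have := dn_pos_aux v
    linarith
  have : π * ((1 / π) * (1 / √(1 - min (v ^ 2) (1 / 4)))) = 1 / √(1 - min (v ^ 2) (1 / 4)) := by
    field_simp
  rw [this, div_le_iff₀ (by linarith)]
  linarith

noncomputable def N (x : ℝ) : ℝ := prim dn (sin (π * x))

lemma N_contDiff : ContDiff ℝ 1 N := by
  unfold N
  exact (prim_contDiff dn_cont).comp (by fun_prop)

lemma N_neg (x : ℝ) : N (-x) = - N x := by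
  unfold N
  rw [mul_neg, sin_neg, prim_neg]
  intro t; simp [dn]

lemma N_per (x : ℝ) : N (x + 2) = N x := by
  unfold N
  rw [show π * (x + 2) = π * x + 2 * π by ring, sin_add_two_pi]

lemma N_deriv (x : ℝ) : ∃ n, HasDerivAt N n x ∧ |n| ≤ 2 := by
  have h1 : HasDerivAt (fun x : ℝ => sin (π * x)) (cos (π * x) * π) x := by
    have := (HasDerivAt.const_mul π (hasDerivAt_id x)).sin
    simpa using this
  have h2 := (prim_hasDerivAt dn_cont (sin (π * x))).comp x h1
  refine ⟨_, h2, ?_⟩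
  have a := dn_le (sin (π * x))
  have b := dn_nonneg (sin (π * x))
  have c := abs_cos_le_one (π * x)
  rw [show dn (sin (π * x)) * (cos (π * x) * π) = (π * dn (sin (π * x))) * cos (π * x) by ring,
    abs_mul, abs_of_nonneg (by positivity)]
  nlinarith [abs_nonneg (cos (π * x)), mul_nonneg pi_pos.le b]

lemma N_id {x : ℝ} (h0 : 0 ≤ x) (h1 : x ≤ 1 / 6) : N x = x := by
  have hp := pi_pos
  have hs0 : 0 ≤ sin (π * x) := sin_nonneg_of_nonneg_of_le_pi (by positivity) (by nlinarith)
  have hs1 : sin (π * x) ≤ 1 / 2 := by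
    rw [← sin_pi_div_six]
    apply sin_le_sin_of_le_of_le_pi_div_two <;> nlinarith
  have key : prim dn (sin (π * x)) = (1 / π) * arcsin (sin (π * x)) - (1 / π) * arcsin 0 := by
    unfold prim
    apply intervalIntegral.integral_eq_sub_of_hasDerivAt (f := fun u => (1 / π) * arcsin u)
    · intro v hv
      rw [uIcc_of_le hs0] at hv
      have := (hasDerivAt_arcsin (x := v) (by linarith [hv.1]) (by linarith [hv.2])).const_mul (1 / π)
      have e : dn v = 1 / π * (1 / √(1 - v ^ 2)) := by
        unfold dn
        rw [min_eq_left]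
        nlinarith [hv.1, hv.2]
      rw [e]; exact this
    · exact dn_cont.intervalIntegrable _ _
  unfold N
  rw [key, arcsin_sin (by nlinarith) (by nlinarith)]
  simp

lemma N_nonneg {x : ℝ} (h0 : 0 ≤ x) (h1 : x ≤ 1) : 0 ≤ N x := by
  have : prim dn 0 = 0 := by simp [prim]
  rw [← this]
  apply prim_mono dn_cont dn_nonneg
  have hp := pi_pos
  exact sin_nonneg_of_nonneg_of_le_pi (by positivity) (by nlinarith)

lemma N_ge {δ x : ℝ} (hδ0 : 0 < δ) (hδ1 : δ ≤ 1 / 100) (h0 : δ ≤ x) (h1 : x ≤ 1 - δ) :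
    δ ≤ N x := by
  have hp := pi_pos
  conv_lhs => rw [← N_id hδ0.le (by linarith : δ ≤ 1 / 6)]
  apply prim_mono dn_cont dn_nonneg
  rcases le_total x (1/2) with h | h
  · apply sin_le_sin_of_le_of_le_pi_div_two <;> nlinarith
  · rw [← sin_pi_sub (π * x)]
    apply sin_le_sin_of_le_of_le_pi_div_two <;> nlinarith

/-- bump density -/
noncomputable def bd (δ t : ℝ) : ℝ := max 0 (48 / δ ^ 3 * ((|t| - δ / 2) * (δ - |t|)))

lemma bd_cont (δ : ℝ) : Continuous (bd δ) := by unfold bd; fun_prop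

lemma bd_nonneg (δ t : ℝ) : 0 ≤ bd δ t := le_max_left _ _

lemma bd_le {δ : ℝ} (hδ : 0 < δ) (t : ℝ) : bd δ t ≤ 3 / δ := by
  unfold bd
  apply max_le (by positivity)
  rw [div_mul_eq_mul_div, div_le_div_iff₀ (by positivity) hδ]
  have : (|t| - δ / 2) * (δ - |t|) ≤ δ ^ 2 / 16 := by nlinarith [sq_nonneg (|t| - 3 * δ / 4)]
  have h2 : 0 < δ := hδ
  nlinarith

lemma bd_zero_small {δ t : ℝ} (hδ : 0 < δ) (h : |t| ≤ δ / 2) : bd δ t = 0 := by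
  unfold bd
  apply max_eq_left
  apply mul_nonpos_of_nonneg_of_nonpos (by positivity)
  apply mul_nonpos_of_nonpos_of_nonneg <;> linarith

lemma bd_zero_large {δ t : ℝ} (hδ : 0 < δ) (h : δ ≤ |t|) : bd δ t = 0 := by
  unfold bd
  apply max_eq_left
  apply mul_nonpos_of_nonneg_of_nonpos (by positivity)
  apply mul_nonpos_of_nonneg_of_nonpos <;> linarith

noncomputable def Φ (δ : ℝ) : ℝ → ℝ := prim (bd δ)

lemma Φ_small {δ x : ℝ} (hδ : 0 < δ) (h0 : 0 ≤ x) (h1 : x ≤ δ / 2) : Φ δ x = 0 := by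
  unfold Φ prim
  rw [intervalIntegral.integral_congr (g := fun _ => (0:ℝ))]
  · simp
  · intro t ht
    rw [uIcc_of_le h0] at ht
    apply bd_zero_small hδ
    rw [abs_of_nonneg ht.1]; linarith [ht.2]

lemma Φ_large {δ x : ℝ} (hδ : 0 < δ) (h0 : δ ≤ x) : Φ δ x = 1 := by
  have hi : ∀ a b, IntervalIntegrable (bd δ) MeasureTheory.volume a b :=
    fun a b => (bd_cont δ).intervalIntegrable a b
  have e1 : (∫ t in (δ/2)..δ, bd δ t) = 1 := by
    rw [intervalIntegral.integral_congr (g := fun t => 48 / δ ^ 3 * ((t - δ / 2) * (δ - t)))]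
    · have : ∀ t ∈ uIcc (δ/2) δ, HasDerivAt
          (fun t : ℝ => 48 / δ ^ 3 * (3 * δ / 4 * t ^ 2 - t ^ 3 / 3 - δ ^ 2 / 2 * t))
          (48 / δ ^ 3 * ((t - δ / 2) * (δ - t))) t := by
        intro t _
        have h := ((((hasDerivAt_pow 2 t).const_mul (3 * δ / 4)).sub
          ((hasDerivAt_pow 3 t).div_const 3)).sub
          ((hasDerivAt_id t).const_mul (δ ^ 2 / 2))).const_mul (48 / δ ^ 3)
        refine h.congr_deriv ?_
        norm_num; left; ring
      rw [intervalIntegral.integral_eq_sub_of_hasDerivAt this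
        (Continuous.intervalIntegrable (by fun_prop) _ _)]
      field_simp; norm_num
    · intro t ht
      rw [uIcc_of_le (by linarith)] at ht
      have : 0 ≤ t := by linarith [ht.1]
      simp only [bd, abs_of_nonneg this]
      apply max_eq_right
      exact mul_nonneg (by positivity) (mul_nonneg (by linarith [ht.1]) (by linarith [ht.2]))
  have e2 : (∫ t in δ..x, bd δ t) = 0 := by
    rw [intervalIntegral.integral_congr (g := fun _ => (0:ℝ))]
    · simp
    · intro t ht
      rw [uIcc_of_le h0] at ht
      apply bd_zero_large hδ
      exact ht.1.trans (le_abs_self t)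
  have e0 := Φ_small hδ (x := δ / 2) (by linarith) le_rfl
  unfold Φ prim at e0 ⊢
  rw [← intervalIntegral.integral_add_adjacent_intervals (hi 0 (δ/2)) (hi _ _),
    ← intervalIntegral.integral_add_adjacent_intervals (hi (δ/2) δ) (hi _ _), e0, e1, e2]
  norm_num

lemma Φ_neg (δ x : ℝ) : Φ δ (-x) = - Φ δ x := prim_neg (fun t => by simp [bd]) x

lemma Φ_mem {δ x : ℝ} (hδ : 0 < δ) (h0 : 0 ≤ x) : 0 ≤ Φ δ x ∧ Φ δ x ≤ 1 := by
  have hm := prim_mono (bd_cont δ) (bd_nonneg δ)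
  constructor
  · rw [← Φ_small hδ le_rfl (by linarith)]; exact hm h0
  · rw [← Φ_large hδ (le_max_right x δ)]; exact hm (le_max_left _ _)

lemma Φ_abs {δ : ℝ} (hδ : 0 < δ) (x : ℝ) : |Φ δ x| ≤ 1 := by
  rcases le_total 0 x with h | h
  · have := Φ_mem hδ h
    rw [abs_le]; constructor <;> linarith
  · have := Φ_mem hδ (x := -x) (by linarith)
    rw [Φ_neg] at this
    rw [abs_le]; constructor <;> linarith

noncomputable def C (δ x : ℝ) : ℝ := x * (1 - Φ δ x ^ 2)

lemma Φ_contDiff (δ : ℝ) : ContDiff ℝ 1 (Φ δ) := prim_contDiff (bd_cont δ)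

lemma C_contDiff (δ : ℝ) : ContDiff ℝ 1 (C δ) := by
  have := Φ_contDiff δ
  unfold C; fun_prop

lemma C_neg (δ x : ℝ) : C δ (-x) = - C δ x := by unfold C; rw [Φ_neg]; ring

lemma C_le {δ x : ℝ} (hδ : 0 < δ) (h0 : 0 ≤ x) :
    0 ≤ C δ x ∧ C δ x ≤ δ * (1 - Φ δ x ^ 2) := by
  have h := Φ_mem hδ h0
  have h2 : 0 ≤ 1 - Φ δ x ^ 2 := by nlinarith [h.1, h.2]
  refine ⟨mul_nonneg h0 h2, ?_⟩
  unfold C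
  rcases le_total x δ with h' | h'
  · exact mul_le_mul_of_nonneg_right h' h2
  · rw [Φ_large hδ h']; simp

lemma C_abs {δ : ℝ} (hδ : 0 < δ) (x : ℝ) : |C δ x| ≤ δ := by
  rcases le_total 0 x with h | h
  · have := C_le hδ h
    rw [abs_le]; constructor <;> nlinarith [sq_nonneg (Φ δ x)]
  · have := C_le hδ (x := -x) (by linarith)
    rw [C_neg] at this
    rw [abs_le]; constructor <;> nlinarith [sq_nonneg (Φ δ (-x))]

lemma Φ_deriv {δ : ℝ} (hδ : 0 < δ) (x : ℝ) :
    ∃ n, HasDerivAt (Φ δ) n x ∧ |n| ≤ 3 / δ ∧ |x * n| ≤ 3 := by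
  refine ⟨_, prim_hasDerivAt (bd_cont δ) x, ?_, ?_⟩
  · rw [abs_of_nonneg (bd_nonneg _ _)]; exact bd_le hδ x
  · rcases le_total |x| δ with h | h
    · rw [abs_mul, abs_of_nonneg (bd_nonneg _ _)]
      calc |x| * bd δ x ≤ δ * (3 / δ) :=
            mul_le_mul h (bd_le hδ x) (bd_nonneg _ _) hδ.le
        _ = 3 := by field_simp
    · rw [bd_zero_large hδ h]; norm_num

lemma C_deriv {δ : ℝ} (hδ : 0 < δ) (x : ℝ) : ∃ n, HasDerivAt (C δ) n x ∧ |n| ≤ 7 := by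
  obtain ⟨n, h, -, h2⟩ := Φ_deriv hδ x
  have := (hasDerivAt_id x).mul ((h.pow 2).const_sub 1)
  refine ⟨_, this, ?_⟩
  have a := abs_le.1 (Φ_abs hδ x)
  have e : |Φ δ x * (x * n)| ≤ 3 := by
    rw [abs_mul]
    nlinarith [Φ_abs hδ x, abs_nonneg (x * n), abs_nonneg (Φ δ x)]
  rw [abs_le] at e ⊢
  simp
  constructor <;> nlinarith [e.1, e.2]


noncomputable def K (s : ℝ) : ℝ := (log (-log s))⁻¹
noncomputable def E (s : ℝ) : ℝ := (-log s)⁻¹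
noncomputable def S (z : ℝ × ℝ) : ℝ := √((z.1 ^ 2 + z.2 ^ 2) / 2)
noncomputable def F (z : ℝ × ℝ) : ℝ := z.1 * z.2 * (K (S z) / S z)
noncomputable def P (z : ℝ × ℝ) : ℝ :=
  z.2 / S z * ((1 - z.1 ^ 2 / (2 * S z ^ 2)) * K (S z) +
    z.1 ^ 2 / (2 * S z ^ 2) * (K (S z) ^ 2 * E (S z)))

lemma S_cont : Continuous S := by unfold S; fun_prop
lemma S_nonneg (z : ℝ × ℝ) : 0 ≤ S z := Real.sqrt_nonneg _
lemma S_sq (z : ℝ × ℝ) : S z ^ 2 = (z.1 ^ 2 + z.2 ^ 2) / 2 := Real.sq_sqrt (by positivity)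
lemma S_eq_zero {z : ℝ × ℝ} (h : S z = 0) : z = 0 := by
  have := S_sq z
  rw [h] at this
  have a : z.1 = 0 := by nlinarith [sq_nonneg z.1, sq_nonneg z.2]
  have b : z.2 = 0 := by nlinarith [sq_nonneg z.1, sq_nonneg z.2]
  exact Prod.ext a b
lemma S_zero : S 0 = 0 := by simp [S]
lemma S_swap (z : ℝ × ℝ) : S z.swap = S z := by simp [S, add_comm]

lemma log_bd {s : ℝ} (h0 : 0 < s) (h1 : s < 1 / 50) : 3 < -log s ∧ 1 < log (-log s) := by
  have e := Real.exp_one_lt_d9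
  have e3 : rexp 3 < 50 := by
    have : rexp 3 = rexp 1 ^ 3 := by rw [← Real.exp_nat_mul]; norm_num
    rw [this]
    calc rexp 1 ^ 3 < 2.7182818286 ^ 3 := by gcongr
      _ < 50 := by norm_num
  have a : 3 < -log s := by
    rw [← Real.log_inv, Real.lt_log_iff_exp_lt (by positivity)]
    refine e3.trans ?_
    rw [lt_inv_comm₀ (by norm_num) h0]; linarith
  refine ⟨a, ?_⟩
  rw [Real.lt_log_iff_exp_lt (by linarith)]
  linarith

lemma K_mem {s : ℝ} (h0 : 0 ≤ s) (h1 : s < 1 / 50) : 0 ≤ K s ∧ K s ≤ 1 := by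
  rcases h0.eq_or_lt with h | h
  · subst h; simp [K]
  · have := (log_bd h h1).2
    exact ⟨inv_nonneg.2 (by linarith), inv_le_one_of_one_le₀ this.le⟩

lemma E_mem {s : ℝ} (h0 : 0 ≤ s) (h1 : s < 1 / 50) : 0 ≤ E s ∧ E s ≤ 1 / 3 := by
  rcases h0.eq_or_lt with h | h
  · subst h; simp [E]
  · have := (log_bd h h1).1
    refine ⟨inv_nonneg.2 (by linarith), ?_⟩
    unfold E
    rw [inv_le_comm₀ (by linarith) (by norm_num)]; linarith

lemma tendsto_KE : Filter.Tendsto K (nhds 0) (nhds 0) ∧ Filter.Tendsto E (nhds 0) (nhds 0) := by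
  have h : Filter.Tendsto (fun s : ℝ => -log s) (nhdsWithin 0 {0}ᶜ) Filter.atTop :=
    Filter.tendsto_neg_atBot_atTop.comp Real.tendsto_log_nhdsNE_zero
  have hk : Filter.Tendsto K (nhdsWithin 0 {0}ᶜ) (nhds 0) :=
    tendsto_inv_atTop_zero.comp (Real.tendsto_log_atTop.comp h)
  have he : Filter.Tendsto E (nhdsWithin 0 {0}ᶜ) (nhds 0) :=
    tendsto_inv_atTop_zero.comp h
  have k0 : K 0 = 0 := by simp [K]
  have e0 : E 0 = 0 := by simp [E]
  constructor
  · have : ContinuousAt K 0 := by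
      rw [continuousAt_iff_punctured_nhds, k0]; exact hk
    simpa [ContinuousAt, k0] using this
  · have : ContinuousAt E 0 := by
      rw [continuousAt_iff_punctured_nhds, e0]; exact he
    simpa [ContinuousAt, e0] using this

lemma P_bd {z : ℝ × ℝ} (h : S z < 1 / 50) : |P z| ≤ 2 * (K (S z) + K (S z) ^ 2 * E (S z)) := by
  have hk := K_mem (S_nonneg z) h
  have he := E_mem (S_nonneg z) h
  have hke : 0 ≤ K (S z) ^ 2 * E (S z) := mul_nonneg (sq_nonneg _) he.1
  rcases (S_nonneg z).eq_or_lt with h0 | h0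
  · simp [P, ← h0, K, E]
  have a1 : |z.2 / S z| ≤ 2 := by
    rw [abs_div, abs_of_pos h0, div_le_iff₀ h0]
    apply abs_le_of_sq_le_sq _ (by positivity)
    nlinarith [S_sq z, sq_nonneg z.1, sq_nonneg z.2]
  have a2 : 0 ≤ z.1 ^ 2 / (2 * S z ^ 2) := by positivity
  have a3 : z.1 ^ 2 / (2 * S z ^ 2) ≤ 1 := by
    rw [div_le_one (by positivity), S_sq]; nlinarith [sq_nonneg z.2]
  unfold P
  rw [abs_mul]
  apply mul_le_mul a1 _ (abs_nonneg _) (by norm_num)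
  rw [abs_of_nonneg]
  · nlinarith [hk.1]
  · have := hk.1
    have : 0 ≤ 1 - z.1 ^ 2 / (2 * S z ^ 2) := by linarith
    positivity

lemma P_bd' {z : ℝ × ℝ} (h : S z < 1 / 50) : |P z| ≤ 8 / 3 := by
  have hk := K_mem (S_nonneg z) h
  have he := E_mem (S_nonneg z) h
  have h1 := P_bd h
  have h2 : K (S z) ^ 2 ≤ 1 := by nlinarith
  have h3 : K (S z) ^ 2 * E (S z) ≤ 1 / 3 := by nlinarith [sq_nonneg (K (S z))]
  linarith

lemma P_contAt {z : ℝ × ℝ} (h : S z < 1 / 50) : ContinuousAt P z := by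
  rcases (S_nonneg z).eq_or_lt with h0 | h0
  · have hz := S_eq_zero h0.symm
    subst hz
    have p0 : P 0 = 0 := by simp [P, S_zero]
    rw [ContinuousAt, p0]
    have hS : Filter.Tendsto S (nhds 0) (nhds 0) := by
      have := S_cont.tendsto 0; rwa [S_zero] at this
    have hK := tendsto_KE.1.comp hS
    have hE := tendsto_KE.2.comp hS
    have ht := (hK.add ((hK.pow 2).mul hE)).const_mul 2
    simp only [Function.comp_apply] at ht
    norm_num at ht
    apply squeeze_zero_norm' _ ht
    filter_upwards [S_cont.continuousAt.eventually_lt continuousAt_const h] with w hw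
    simpa using P_bd hw
  · have hl := log_bd h0 h
    have cS : ContinuousAt S z := S_cont.continuousAt
    have cl : ContinuousAt (fun w => -log (S w)) z := (cS.log h0.ne').neg
    have cK : ContinuousAt (fun w => K (S w)) z :=
      (cl.log (by linarith)).inv₀ (by linarith)
    have cE : ContinuousAt (fun w => E (S w)) z := cl.inv₀ (by linarith)
    have c1 : ContinuousAt (fun w : ℝ × ℝ => w.1 ^ 2 / (2 * S w ^ 2)) z :=
      ContinuousAt.div (by fun_prop) (by fun_prop) (by positivity)
    have c2 : ContinuousAt (fun w : ℝ × ℝ => w.2 / S w) z :=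
      ContinuousAt.div (by fun_prop) (by fun_prop) (by positivity)
    unfold P
    fun_prop

lemma F_bd {z : ℝ × ℝ} (h : S z < 1 / 50) : |F z| ≤ S z * K (S z) := by
  have hk := K_mem (S_nonneg z) h
  rcases (S_nonneg z).eq_or_lt with h0 | h0
  · simp [F, ← h0]
  unfold F
  rw [abs_mul, abs_of_nonneg (div_nonneg hk.1 h0.le), ← mul_div_assoc, div_le_iff₀ h0]
  have : |z.1 * z.2| ≤ S z ^ 2 := by
    rw [S_sq, abs_le]; constructor <;> nlinarith [sq_nonneg (z.1 + z.2), sq_nonneg (z.1 - z.2)]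
  nlinarith [hk.1]

noncomputable def F' (z : ℝ × ℝ) : ℝ × ℝ →L[ℝ] ℝ :=
  P z • ContinuousLinearMap.fst ℝ ℝ ℝ + P z.swap • ContinuousLinearMap.snd ℝ ℝ ℝ

lemma S_le_norm (z : ℝ × ℝ) : S z ≤ ‖z‖ := by
  unfold S
  apply Real.sqrt_le_iff.2 ⟨norm_nonneg _, ?_⟩
  have a := norm_fst_le z
  have b := norm_snd_le z
  rw [Real.norm_eq_abs] at a b
  have a' := sq_le_sq' (by linarith [abs_nonneg z.1, neg_abs_le z.1]) ((le_abs_self _).trans a)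
  have b' := sq_le_sq' (by linarith [abs_nonneg z.2, neg_abs_le z.2]) ((le_abs_self _).trans b)
  linarith

lemma F_hasFDerivAt {z : ℝ × ℝ} (h : S z < 1 / 50) : HasFDerivAt F (F' z) z := by
  rcases (S_nonneg z).eq_or_lt with h0 | h0
  · have hz := S_eq_zero h0.symm
    subst hz
    have p0 : F' 0 = 0 := by
      ext <;> simp [F', P, S_zero]
    rw [p0, hasFDerivAt_iff_isLittleO_nhds_zero]
    have hS : Filter.Tendsto S (nhds 0) (nhds 0) := by
      have := S_cont.tendsto 0; rwa [S_zero] at this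
    have hK := tendsto_KE.1.comp hS
    rw [Asymptotics.isLittleO_iff]
    intro c hc
    filter_upwards [S_cont.continuousAt.eventually_lt continuousAt_const h,
      hK.eventually_lt_const hc] with w hw hw2
    have f0 : F 0 = 0 := by simp [F]
    simp only [zero_add, f0, _root_.zero_apply, sub_zero, Real.norm_eq_abs]
    refine (F_bd hw).trans ?_
    rw [mul_comm]
    exact mul_le_mul hw2.le (S_le_norm w) (S_nonneg w) hc.le
  · have hl := log_bd h0 h
    have d1 : HasFDerivAt (fun w : ℝ × ℝ => w.1) (ContinuousLinearMap.fst ℝ ℝ ℝ) z := hasFDerivAt_fst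
    have d2 : HasFDerivAt (fun w : ℝ × ℝ => w.2) (ContinuousLinearMap.snd ℝ ℝ ℝ) z := hasFDerivAt_snd
    have pos : 0 < (z.1 ^ 2 + z.2 ^ 2) / 2 := by rw [← S_sq]; positivity
    have dS : HasFDerivAt S ((z.1 / (2 * S z)) • ContinuousLinearMap.fst ℝ ℝ ℝ +
        (z.2 / (2 * S z)) • ContinuousLinearMap.snd ℝ ℝ ℝ) z := by
      have := ((((d1.pow 2).add (d2.pow 2)).mul_const (1/2)).sqrt
        (by simp only [Pi.add_apply]; linarith))
      have e : S = fun w : ℝ × ℝ => √((w.1 ^ 2 + w.2 ^ 2) * (1 / 2)) := by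
        funext w; unfold S; congr 1; ring
      have ez : √((z.1 ^ 2 + z.2 ^ 2) * (1 / 2)) = S z := by rw [e]
      rw [e]
      refine this.congr_fderiv ?_
      ext <;> simp <;> ring_nf <;> rw [inv_inv] <;> ring
    have dl : HasDerivAt (fun s => -log s) (-(S z)⁻¹) (S z) := (Real.hasDerivAt_log h0.ne').neg
    have dL := dl.log (by linarith : -log (S z) ≠ 0)
    have dK := dL.inv (by linarith : log (-log (S z)) ≠ 0)
    have dm := dK.div (hasDerivAt_id (S z)) h0.ne'
    have dmS := HasDerivAt.comp_hasFDerivAt z dm dS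
    have := (d1.mul d2).mul dmS
    refine HasFDerivAt.congr_fderiv (f := F) this ?_
    have hl2 : (0:ℝ) < log (-log (S z)) := by linarith
    have hl1 : (0:ℝ) < -log (S z) := by linarith
    have q2 : z.2 ^ 2 = 2 * S z ^ 2 - z.1 ^ 2 := by rw [S_sq]; ring
    ext
    · simp [F', P, S_swap, K, E]
      field_simp
      ring
    · simp [F', P, S_swap, K, E]
      field_simp
      ring

lemma F_contDiffAt {z : ℝ × ℝ} (h : S z < 1 / 50) : ContDiffAt ℝ 1 F z := by
  rw [contDiffAt_one_iff]
  refine ⟨F', {w | S w < 1 / 50}, (isOpen_lt S_cont continuous_const).mem_nhds h, ?_,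
    fun w hw => F_hasFDerivAt hw⟩
  intro w hw
  apply ContinuousAt.continuousWithinAt
  unfold F'
  have a := P_contAt hw
  have b : ContinuousAt (fun w : ℝ × ℝ => P w.swap) w :=
    ContinuousAt.comp (f := Prod.swap) (P_contAt (z := w.swap) (by rw [S_swap]; exact hw))
      continuous_swap.continuousAt
  fun_prop


noncomputable def W (δ : ℝ) (z : ℝ × ℝ) : ℝ :=
  Φ δ (N z.1) * Φ δ (N z.2) + F (C δ (N z.1), C δ (N z.2))

lemma S_C {δ : ℝ} (hδ0 : 0 < δ) (hδ1 : δ ≤ 1 / 100) (x y : ℝ) : S (C δ x, C δ y) < 1 / 50 := by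
  refine (S_le_norm _).trans_lt ?_
  have := C_abs hδ0 x
  have := C_abs hδ0 y
  rw [Prod.norm_def]
  apply max_lt <;> simp only [Real.norm_eq_abs] <;> linarith

lemma F_neg1 (x y : ℝ) : F (-x, y) = - F (x, y) := by simp [F, S]
lemma F_swap (x y : ℝ) : F (x, y) = F (y, x) := by
  simp only [F, S]; rw [add_comm (x ^ 2), mul_comm x]

lemma W_swap (δ x y : ℝ) : W δ (x, y) = W δ (y, x) := by
  simp only [W]; rw [F_swap, mul_comm]

lemma W_contDiff {δ : ℝ} (hδ0 : 0 < δ) (hδ1 : δ ≤ 1 / 100) : ContDiff ℝ 1 (W δ) := by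
  have a : ContDiff ℝ 1 (fun x => Φ δ (N x)) := (Φ_contDiff δ).comp N_contDiff
  have b : ContDiff ℝ 1 (fun x => C δ (N x)) := (C_contDiff δ).comp N_contDiff
  have a1 : ContDiff ℝ 1 (fun z : ℝ × ℝ => Φ δ (N z.1)) := a.comp contDiff_fst
  have a2 : ContDiff ℝ 1 (fun z : ℝ × ℝ => Φ δ (N z.2)) := a.comp contDiff_snd
  have b1 : ContDiff ℝ 1 (fun z : ℝ × ℝ => C δ (N z.1)) := b.comp contDiff_fst
  have b2 : ContDiff ℝ 1 (fun z : ℝ × ℝ => C δ (N z.2)) := b.comp contDiff_snd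
  rw [contDiff_iff_contDiffAt]
  intro z
  unfold W
  refine (a1.mul a2).contDiffAt.add ?_
  exact ContDiffAt.comp (g := F) (f := fun z : ℝ × ℝ => (C δ (N z.1), C δ (N z.2))) z
    (F_contDiffAt (S_C hδ0 hδ1 _ _)) (b1.prodMk b2).contDiffAt

lemma W_slice {δ : ℝ} (hδ0 : 0 < δ) (hδ1 : δ ≤ 1 / 100) (x y : ℝ) :
    ∃ n, HasDerivAt (fun t => W δ (t, y)) n x ∧ |n| ≤ 7 / δ := by
  obtain ⟨n, hn, bn⟩ := N_deriv x
  obtain ⟨p, hp, bp, -⟩ := Φ_deriv hδ0 (N x)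
  obtain ⟨c, hc, bc⟩ := C_deriv hδ0 (N x)
  have hS := S_C hδ0 hδ1 (N x) (N y)
  have h1 := (hp.comp x hn).mul_const (Φ δ (N y))
  have h2 : HasDerivAt (fun t => (C δ (N t), C δ (N y))) (c * n, 0) x :=
    (hc.comp x hn).prodMk (hasDerivAt_const x _)
  have h3 := HasFDerivAt.comp_hasDerivAt x (F_hasFDerivAt hS) h2
  refine ⟨_, h1.add h3, ?_⟩
  simp only [F', add_apply, FunLike.coe_smul, Pi.smul_apply, ContinuousLinearMap.coe_fst',
    ContinuousLinearMap.coe_snd', smul_eq_mul, mul_zero, add_zero]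
  have bP := P_bd' hS
  have bφ := Φ_abs hδ0 (N y)
  generalize P (C δ (N x), C δ (N y)) = q at *
  generalize Φ δ (N y) = φ at *
  have hd : 100 ≤ 1 / δ := by rw [le_div_iff₀ hδ0]; linarith
  calc |p * n * φ + q * (c * n)| ≤ |p * n * φ| + |q * (c * n)| := abs_add_le _ _
    _ = |p| * |n| * |φ| + |q| * (|c| * |n|) := by simp only [abs_mul]
    _ ≤ 3 / δ * 2 * 1 + 8 / 3 * (7 * 2) := by gcongr
    _ ≤ 7 / δ := by
      have e1 : 3 / δ = 3 * (1 / δ) := by ring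
      have e2 : 7 / δ = 7 * (1 / δ) := by ring
      rw [e1, e2]; linarith

lemma W_fderiv1 {δ : ℝ} (hδ0 : 0 < δ) (hδ1 : δ ≤ 1 / 100) (z : ℝ × ℝ) :
    |fderiv ℝ (W δ) z (1, 0)| ≤ 7 / δ := by
  obtain ⟨n, hn, bn⟩ := W_slice hδ0 hδ1 z.1 z.2
  have hW : HasFDerivAt (W δ) (fderiv ℝ (W δ) z) (z.1, z.2) :=
    ((W_contDiff hδ0 hδ1).differentiable (by norm_num) z).hasFDerivAt
  have h2 : HasDerivAt (fun t : ℝ => (t, z.2)) ((1:ℝ), (0:ℝ)) z.1 :=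
    (hasDerivAt_id z.1).prodMk (hasDerivAt_const _ _)
  have h3 := HasFDerivAt.comp_hasDerivAt z.1 hW h2
  have := h3.unique hn
  rw [this]; exact bn

lemma W_fderiv2 {δ : ℝ} (hδ0 : 0 < δ) (hδ1 : δ ≤ 1 / 100) (z : ℝ × ℝ) :
    |fderiv ℝ (W δ) z (0, 1)| ≤ 7 / δ := by
  obtain ⟨n, hn, bn⟩ := W_slice hδ0 hδ1 z.2 z.1
  have hW : HasFDerivAt (W δ) (fderiv ℝ (W δ) z) (z.1, z.2) :=
    ((W_contDiff hδ0 hδ1).differentiable (by norm_num) z).hasFDerivAt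
  have h2 : HasDerivAt (fun t : ℝ => (z.1, t)) ((0:ℝ), (1:ℝ)) z.2 :=
    (hasDerivAt_const _ _).prodMk (hasDerivAt_id z.2)
  have e : (fun t => W δ (t, z.1)) = (W δ) ∘ (fun t : ℝ => (z.1, t)) := by
    funext t; exact W_swap δ t z.1
  rw [e] at hn
  have := (HasFDerivAt.comp_hasDerivAt z.2 hW h2).unique hn
  rw [this]; exact bn

lemma W_mem {δ x y : ℝ} (hδ0 : 0 < δ) (hδ1 : δ ≤ 1 / 100) (hx : 0 ≤ N x) (hy : 0 ≤ N y) :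
    0 ≤ W δ (x, y) ∧ W δ (x, y) ≤ 1 := by
  have a := Φ_mem hδ0 hx
  have b := Φ_mem hδ0 hy
  have c := C_le hδ0 hx
  have d := C_le hδ0 hy
  have hS := S_C hδ0 hδ1 (N x) (N y)
  have hk := K_mem (S_nonneg _) hS
  have hF0 : 0 ≤ F (C δ (N x), C δ (N y)) :=
    mul_nonneg (mul_nonneg c.1 d.1) (div_nonneg hk.1 (S_nonneg _))
  have hSle : S (C δ (N x), C δ (N y)) ≤ C δ (N x) + C δ (N y) := by
    unfold S
    apply Real.sqrt_le_iff.2 ⟨by linarith [c.1, d.1], ?_⟩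
    nlinarith [c.1, d.1, mul_nonneg c.1 d.1]
  have hF1 : F (C δ (N x), C δ (N y)) ≤ C δ (N x) + C δ (N y) := by
    have := (le_abs_self _).trans (F_bd hS)
    nlinarith [S_nonneg (C δ (N x), C δ (N y)), hk.1, hk.2]
  simp only [W]
  constructor
  · have := mul_nonneg a.1 b.1
    linarith
  · have e1 : 0 ≤ 1 - Φ δ (N x) ^ 2 := by nlinarith [a.1, a.2]
    have e2 : 0 ≤ 1 - Φ δ (N y) ^ 2 := by nlinarith [b.1, b.2]
    nlinarith [sq_nonneg (Φ δ (N x) - Φ δ (N y)), c.2, d.2]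

end Aux


/-- For every δ ∈ (0, 1/100] there exists a C¹ function ω₀ : ℝ² → ℝ,
2-periodic in each variable, odd in x₁ and in x₂, with 0 ≤ ω₀ ≤ 1 on [0,1]²,
ω₀ = 1 on [δ, 1−δ]², ω₀(s,s) = s / log(−log s) for s ∈ (0, δ/2], and the Euclidean
norm of the gradient bounded by 20/δ everywhere. -/
theorem statement0 (δ : ℝ) (hδ0 : 0 < δ) (hδ1 : δ ≤ 1 / 100) :
    ∃ ω₀ : ℝ × ℝ → ℝ,
      ContDiff ℝ 1 ω₀ ∧
      (∀ x : ℝ × ℝ, ω₀ (x.1 + 2, x.2) = ω₀ x) ∧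
      (∀ x : ℝ × ℝ, ω₀ (x.1, x.2 + 2) = ω₀ x) ∧
      (∀ x : ℝ × ℝ, ω₀ (-x.1, x.2) = -ω₀ x) ∧
      (∀ x : ℝ × ℝ, ω₀ (x.1, -x.2) = -ω₀ x) ∧
      (∀ x ∈ Icc (0:ℝ) 1 ×ˢ Icc (0:ℝ) 1, ω₀ x ∈ Icc (0:ℝ) 1) ∧
      (∀ x ∈ Icc δ (1 - δ) ×ˢ Icc δ (1 - δ), ω₀ x = 1) ∧
      (∀ s ∈ Ioc (0:ℝ) (δ / 2), ω₀ (s, s) = s / Real.log (-Real.log s)) ∧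
      (∀ x : ℝ × ℝ,
        Real.sqrt ((fderiv ℝ ω₀ x (1, 0)) ^ 2 + (fderiv ℝ ω₀ x (0, 1)) ^ 2) ≤ 20 / δ) := by
  refine ⟨Aux.W δ, Aux.W_contDiff hδ0 hδ1, ?_, ?_, ?_, ?_, ?_, ?_, ?_, ?_⟩
  · intro x; simp only [Aux.W, Aux.N_per]
  · intro x; simp only [Aux.W, Aux.N_per]
  · intro x
    simp only [Aux.W, Aux.N_neg, Aux.Φ_neg, Aux.C_neg, Aux.F_neg1]; ring
  · intro x
    rw [Aux.W_swap, show Aux.W δ x = Aux.W δ (x.2, x.1) from Aux.W_swap δ x.1 x.2]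
    simp only [Aux.W, Aux.N_neg, Aux.Φ_neg, Aux.C_neg, Aux.F_neg1]; ring
  · rintro ⟨x, y⟩ ⟨hx, hy⟩
    exact Aux.W_mem hδ0 hδ1 (Aux.N_nonneg hx.1 hx.2) (Aux.N_nonneg hy.1 hy.2)
  · rintro ⟨x, y⟩ ⟨hx, hy⟩
    have h1 := Aux.Φ_large hδ0 (Aux.N_ge hδ0 hδ1 hx.1 hx.2)
    have h2 := Aux.Φ_large hδ0 (Aux.N_ge hδ0 hδ1 hy.1 hy.2)
    simp only at h1 h2
    simp [Aux.W, Aux.C, h1, h2, Aux.F]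
  · rintro s ⟨h0, h1⟩
    have hN := Aux.N_id h0.le (by linarith)
    have hΦ := Aux.Φ_small hδ0 h0.le h1
    have hS : Aux.S (s, s) = s := by
      simp only [Aux.S]
      rw [show (s ^ 2 + s ^ 2) / 2 = s ^ 2 by ring, Real.sqrt_sq h0.le]
    have hC : Aux.C δ s = s := by simp [Aux.C, hΦ]
    simp only [Aux.W, hN, hΦ, hC, Aux.F, hS, Aux.K]
    rw [div_eq_mul_inv s]
    generalize (Real.log (-Real.log s))⁻¹ = k
    field_simp
    ring
  · intro x
    have a := Aux.W_fderiv1 hδ0 hδ1 x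
    have b := Aux.W_fderiv2 hδ0 hδ1 x
    apply Real.sqrt_le_iff.2 ⟨by positivity, ?_⟩
    have a' := sq_le_sq' (by linarith [neg_abs_le (fderiv ℝ (Aux.W δ) x (1, 0))])
      ((le_abs_self _).trans a)
    have b' := sq_le_sq' (by linarith [neg_abs_le (fderiv ℝ (Aux.W δ) x (0, 1))])
      ((le_abs_self _).trans b)
    have e : (20 / δ) ^ 2 = 400 * (1 / δ) ^ 2 := by ring
    have e' : (7 / δ) ^ 2 = 49 * (1 / δ) ^ 2 := by ring
    rw [e'] at a' b'
    rw [e]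
    nlinarith [sq_nonneg (1 / δ)]
end

section
/- Define g : ℝ² → ℝ by g(0) = 0 and g(x) = √2 · x₁ x₂ / (|x| · log(−log |x|)) for 0 < |x| < e^{−e}, where |x| = √(x₁² + x₂²). Then g is continuously differentiable on the open ball B(0, e^{−e}) ⊂ ℝ², with ∇g(0) = 0. -/
open Real Set

lemma aux_pos {r : ℝ} (h0 : 0 < r) (h1 : r < Real.exp (-(Real.exp 1))) :
    1 < -Real.log r ∧ 1 < Real.log (-Real.log r) := by
  have h2 : Real.log r < -Real.exp 1 := (Real.log_lt_iff_lt_exp h0).2 h1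
  have h3 : (1:ℝ) < Real.exp 1 := by
    have := Real.add_one_lt_exp (x := 1) one_ne_zero
    linarith
  refine ⟨by linarith, ?_⟩
  rw [Real.lt_log_iff_exp_lt (by linarith)]
  linarith

lemma aux_tendsto :
    Filter.Tendsto (fun r : ℝ => (Real.log (-Real.log r))⁻¹) (nhdsWithin 0 (Ioi 0)) (nhds 0) := by
  apply Filter.Tendsto.inv_tendsto_atTop
  apply Real.tendsto_log_atTop.comp
  exact Filter.tendsto_neg_atBot_atTop.comp Real.tendsto_log_nhdsGT_zero

lemma aux_h {r : ℝ} (h0 : 0 < r) (h1 : r < Real.exp (-(Real.exp 1))) :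
    ∃ d : ℝ, HasDerivAt (fun r : ℝ => (r * Real.log (-Real.log r))⁻¹) d r ∧
      |d| * r ^ 2 ≤ 2 * (Real.log (-Real.log r))⁻¹ := by
  obtain ⟨ha, hb⟩ := aux_pos h0 h1
  have e1 : HasDerivAt (fun r : ℝ => Real.log (-Real.log r)) (-r⁻¹ / (-Real.log r)) r :=
    ((Real.hasDerivAt_log h0.ne').fun_neg).log (by linarith)
  have e2 := ((hasDerivAt_id r).fun_mul e1).fun_inv (by
    simp only [id]; exact (mul_pos h0 (by linarith)).ne')
  refine ⟨_, e2, ?_⟩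
  simp only [id]
  generalize hL : Real.log (-Real.log r) = L at *
  generalize -Real.log r = M at *
  have hM : 0 < M := by linarith
  have hLp : 0 < L := by linarith
  have hMi : M⁻¹ ≤ 1 := inv_le_one_of_one_le₀ ha.le
  have hMp : 0 < M⁻¹ := by positivity
  have : -(1 * L + r * (-r⁻¹ / M)) / (r * L) ^ 2 = -(L - M⁻¹) / (r ^ 2 * L ^ 2) := by
    field_simp
    ring
  rw [this, neg_div, abs_neg, abs_of_nonneg (by
    apply div_nonneg; linarith; positivity)]
  have : (L - M⁻¹) / (r ^ 2 * L ^ 2) * r ^ 2 = (L - M⁻¹) / L * L⁻¹ := by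
    field_simp
  rw [this]
  gcongr
  rw [div_le_iff₀ hLp]
  linarith

/-- the model function -/
noncomputable def auxF (x : EuclideanSpace ℝ (Fin 2)) : ℝ :=
  (Real.sqrt 2 * (x 0 * x 1)) * (‖x‖ * Real.log (-Real.log ‖x‖))⁻¹

lemma aux_coord (x : EuclideanSpace ℝ (Fin 2)) (i : Fin 2) : |x i| ≤ ‖x‖ := by
  simpa using PiLp.norm_apply_le x i

lemma aux_projnorm (i : Fin 2) :
    ‖(EuclideanSpace.proj i : EuclideanSpace ℝ (Fin 2) →L[ℝ] ℝ)‖ ≤ 1 := by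
  apply ContinuousLinearMap.opNorm_le_bound _ zero_le_one
  intro x
  simpa using aux_coord x i

lemma aux_fderiv {x : EuclideanSpace ℝ (Fin 2)} (h0 : 0 < ‖x‖)
    (h1 : ‖x‖ < Real.exp (-(Real.exp 1))) :
    ‖fderiv ℝ auxF x‖ ≤ Real.sqrt 2 * 4 * (Real.log (-Real.log ‖x‖))⁻¹ := by
  obtain ⟨ha, hb⟩ := aux_pos h0 h1
  obtain ⟨d, hd, hd2⟩ := aux_h h0 h1
  have hx : x ≠ 0 := norm_pos_iff.1 h0
  have hN : HasFDerivAt (fun y : EuclideanSpace ℝ (Fin 2) => ‖y‖) (fderiv ℝ (fun y => ‖y‖) x) x :=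
    ((contDiffAt_norm ℝ hx (n := 1)).differentiableAt one_ne_zero).hasFDerivAt
  have hN1 : ‖fderiv ℝ (fun y : EuclideanSpace ℝ (Fin 2) => ‖y‖) x‖ ≤ 1 := by
    simpa using norm_fderiv_le_of_lipschitz ℝ (x₀ := x) (lipschitzWith_one_norm (E := EuclideanSpace ℝ (Fin 2)))
  have hP (i : Fin 2) : HasFDerivAt (fun y : EuclideanSpace ℝ (Fin 2) => y i)
      (EuclideanSpace.proj i : EuclideanSpace ℝ (Fin 2) →L[ℝ] ℝ) x :=
    (EuclideanSpace.proj i : EuclideanSpace ℝ (Fin 2) →L[ℝ] ℝ).hasFDerivAt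
  have hF := (((hP 0).fun_mul (hP 1)).const_mul (Real.sqrt 2)).fun_mul (hd.comp_hasFDerivAt x hN)
  have hF' : HasFDerivAt auxF _ x := hF
  rw [hF'.fderiv]
  have c0 := aux_coord x 0
  have c1 := aux_coord x 1
  have p0 := aux_projnorm 0
  have p1 := aux_projnorm 1
  generalize fderiv ℝ (fun y : EuclideanSpace ℝ (Fin 2) => ‖y‖) x = N at *
  generalize hp0 : (EuclideanSpace.proj 0 : EuclideanSpace ℝ (Fin 2) →L[ℝ] ℝ) = P0 at *
  generalize hp1 : (EuclideanSpace.proj 1 : EuclideanSpace ℝ (Fin 2) →L[ℝ] ℝ) = P1 at *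
  simp only [Function.comp]
  generalize hL : Real.log (-Real.log ‖x‖) = L at *
  have hLp : 0 < L := by linarith
  generalize hr : ‖x‖ = r at *
  have b1 : ‖(Real.sqrt 2 * (x 0 * x 1)) • (d • N)‖ ≤ Real.sqrt 2 * (2 * L⁻¹) := by
    rw [norm_smul, norm_smul, Real.norm_eq_abs, Real.norm_eq_abs, abs_mul, abs_mul,
      abs_of_nonneg (Real.sqrt_nonneg 2)]
    calc _ ≤ Real.sqrt 2 * (r * r) * (|d| * 1) := by gcongr
      _ = Real.sqrt 2 * (|d| * r ^ 2) := by ring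
      _ ≤ _ := by gcongr
  have b2 : ‖(r * L)⁻¹ • (Real.sqrt 2 • (x 0 • P1 + x 1 • P0))‖ ≤ Real.sqrt 2 * (2 * L⁻¹) := by
    rw [norm_smul, norm_smul, Real.norm_eq_abs, Real.norm_eq_abs,
      abs_of_nonneg (Real.sqrt_nonneg 2), abs_of_pos (by positivity)]
    have : ‖x 0 • P1 + x 1 • P0‖ ≤ r * 1 + r * 1 := by
      refine (norm_add_le _ _).trans ?_
      rw [norm_smul, norm_smul, Real.norm_eq_abs, Real.norm_eq_abs]
      gcongr
    calc _ ≤ (r * L)⁻¹ * (Real.sqrt 2 * (r * 1 + r * 1)) := by gcongr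
      _ = _ := by field_simp; ring
  refine (norm_add_le _ _).trans ?_
  linarith

lemma aux_smooth {x : EuclideanSpace ℝ (Fin 2)} (h0 : 0 < ‖x‖)
    (h1 : ‖x‖ < Real.exp (-(Real.exp 1))) : ContDiffAt ℝ 1 auxF x := by
  obtain ⟨ha, hb⟩ := aux_pos h0 h1
  have hx : x ≠ 0 := norm_pos_iff.1 h0
  have hN : ContDiffAt ℝ 1 (fun y : EuclideanSpace ℝ (Fin 2) => ‖y‖) x := contDiffAt_norm ℝ hx
  have hP (i : Fin 2) : ContDiffAt ℝ 1 (fun y : EuclideanSpace ℝ (Fin 2) => y i) x :=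
    (EuclideanSpace.proj i : EuclideanSpace ℝ (Fin 2) →L[ℝ] ℝ).contDiff.contDiffAt
  have hl := ((hN.log h0.ne').neg).log (by linarith)
  exact (contDiffAt_const.mul ((hP 0).mul (hP 1))).mul
    ((hN.mul hl).inv (mul_pos h0 (by linarith)).ne')

/-- g(0) = 0 and g(x) = √2·x₁x₂/(|x|·log(−log|x|)) for 0 < |x| < e^{−e}
is continuously differentiable on the Euclidean ball B(0, e^{−e}) ⊂ ℝ², with ∇g(0) = 0. -/
theorem statement2 (g : EuclideanSpace ℝ (Fin 2) → ℝ) (hg0 : g 0 = 0)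
    (hg : ∀ x : EuclideanSpace ℝ (Fin 2), 0 < ‖x‖ → ‖x‖ < Real.exp (-(Real.exp 1)) →
      g x = Real.sqrt 2 * (x 0) * (x 1) / (‖x‖ * Real.log (-Real.log ‖x‖))) :
    ContDiffOn ℝ 1 g (Metric.ball 0 (Real.exp (-(Real.exp 1)))) ∧
    gradient g 0 = 0 := by
  have hgF : ∀ x : EuclideanSpace ℝ (Fin 2), 0 < ‖x‖ → ‖x‖ < Real.exp (-(Real.exp 1)) →
      g x = auxF x := by
    intro x h0 h1
    rw [hg x h0 h1, auxF, div_eq_mul_inv, mul_assoc (Real.sqrt 2)]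
  have hev : ∀ x : EuclideanSpace ℝ (Fin 2), 0 < ‖x‖ → ‖x‖ < Real.exp (-(Real.exp 1)) →
      g =ᶠ[nhds x] auxF := by
    intro x h0 h1
    filter_upwards [continuous_norm.continuousAt.eventually_lt continuousAt_const h1,
      continuousAt_const.eventually_lt continuous_norm.continuousAt h0] with y hy1 hy0
    exact hgF y hy0 hy1
  have hE : 0 < Real.exp (-(Real.exp 1)) := Real.exp_pos _
  have hnorm : Filter.Tendsto (fun x : EuclideanSpace ℝ (Fin 2) => ‖x‖)
      (nhdsWithin 0 {0}ᶜ) (nhdsWithin 0 (Ioi 0)) := tendsto_norm_nhdsNE_zero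
  have hlim := aux_tendsto.comp hnorm
  have hsmall : ∀ᶠ x : EuclideanSpace ℝ (Fin 2) in nhdsWithin 0 {0}ᶜ,
      0 < ‖x‖ ∧ ‖x‖ < Real.exp (-(Real.exp 1)) :=
    hnorm.eventually (Ioo_mem_nhdsGT hE)
  have hd0 : HasFDerivAt g (0 : EuclideanSpace ℝ (Fin 2) →L[ℝ] ℝ) 0 := by
    rw [hasFDerivAt_iff_isLittleO_nhds_zero, Asymptotics.isLittleO_iff]
    intro c hc
    have hlim2 := hlim.const_mul (Real.sqrt 2)
    rw [mul_zero] at hlim2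
    have h3 := hsmall.and (hlim2.eventually (gt_mem_nhds hc))
    rw [eventually_nhdsWithin_iff] at h3
    filter_upwards [h3] with x hx
    by_cases hx0 : x = 0
    · simp [hx0]
    · obtain ⟨⟨h0, h1⟩, h2⟩ := hx hx0
      simp only [zero_add, hg0, sub_zero, zero_apply]
      rw [hgF x h0 h1, auxF]
      have c0 := aux_coord x 0
      have c1 := aux_coord x 1
      obtain ⟨ha, hb⟩ := aux_pos h0 h1
      simp only [Function.comp] at h2
      generalize hL : Real.log (-Real.log ‖x‖) = L at *
      have hLp : 0 < L := by linarith
      rw [Real.norm_eq_abs, abs_mul, abs_mul, abs_mul, abs_of_nonneg (Real.sqrt_nonneg 2),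
        abs_of_pos (show 0 < (‖x‖ * L)⁻¹ by positivity)]
      calc _ ≤ Real.sqrt 2 * (‖x‖ * ‖x‖) * (‖x‖ * L)⁻¹ := by gcongr
        _ = (Real.sqrt 2 * L⁻¹) * ‖x‖ := by field_simp
        _ ≤ _ := by gcongr
  refine ⟨?_, ?_⟩
  · have key : ∀ x : EuclideanSpace ℝ (Fin 2), ‖x‖ < Real.exp (-(Real.exp 1)) →
        DifferentiableAt ℝ g x ∧ ContinuousAt (fderiv ℝ g) x := by
      intro x h1
      by_cases hx : x = 0
      · subst hx
        refine ⟨hd0.differentiableAt, ?_⟩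
        rw [continuousAt_iff_punctured_nhds, hd0.fderiv]
        have hlim2 := hlim.const_mul (Real.sqrt 2 * 4)
        rw [mul_zero] at hlim2
        refine squeeze_zero_norm' ?_ hlim2
        filter_upwards [hsmall] with x hx
        rw [(hev x hx.1 hx.2).fderiv_eq]
        exact aux_fderiv hx.1 hx.2
      · have h0 : 0 < ‖x‖ := norm_pos_iff.2 hx
        have hc : ContDiffAt ℝ 1 g x := (aux_smooth h0 h1).congr_of_eventuallyEq (hev x h0 h1)
        exact ⟨hc.differentiableAt one_ne_zero, hc.continuousAt_fderiv one_ne_zero⟩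
    rw [show (1 : WithTop ℕ∞) = 0 + 1 from (zero_add _).symm,
      contDiffOn_succ_iff_fderiv_of_isOpen Metric.isOpen_ball, contDiffOn_zero]
    refine ⟨fun x hx => ?_, by simp, fun x hx => ?_⟩
    · exact (key x (by simpa using hx)).1.differentiableWithinAt
    · exact (key x (by simpa using hx)).2.continuousWithinAt
  · rw [gradient, hd0.fderiv, map_zero]
end

section
/- Let 0 < a < 1 and δ > 0 satisfy a² + 48δ/π ≤ 1, and let S = {(r cos θ, r sin θ) : a ≤ r ≤ 1, π/6 ≤ θ ≤ π/3} ⊂ ℝ². Then for every Lebesgue-measurable set E ⊆ S with two-dimensional Lebesgue measure |E| ≤ 4δ, one has ∫_{S ∖ E} |y|^{−2} dy ≥ (π/12) · (−ln(a² + 48δ/π)). -/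
open Real Set MeasureTheory

/-- Radial one-dimensional integral. -/
lemma radial_aux (a R : ℝ) (ha : 0 < a) (haR : a ≤ R) (hR : R ≤ 1) :
    ∫ r in a..1, r * min ((r ^ 2)⁻¹) ((R ^ 2)⁻¹) =
      (R ^ 2)⁻¹ * ((R ^ 2 - a ^ 2) / 2) - Real.log R := by
  have hR0 : 0 < R := by linarith
  have hcont : ∀ u v : ℝ, 0 < u → u ≤ v →
      IntervalIntegrable (fun r : ℝ => r * min ((r ^ 2)⁻¹) ((R ^ 2)⁻¹)) volume u v := by
    intro u v hu huv
    apply ContinuousOn.intervalIntegrable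
    rw [uIcc_of_le huv]
    refine continuousOn_id.mul (ContinuousOn.inf ?_ continuousOn_const)
    refine ContinuousOn.inv₀ (by fun_prop) ?_
    intro x hx
    have : 0 < x := lt_of_lt_of_le hu hx.1
    positivity
  rw [← intervalIntegral.integral_add_adjacent_intervals (hcont a R ha haR) (hcont R 1 hR0 hR)]
  have h1 : ∫ r in a..R, r * min ((r ^ 2)⁻¹) ((R ^ 2)⁻¹) = ∫ r in a..R, r * (R ^ 2)⁻¹ := by
    apply intervalIntegral.integral_congr
    intro r hr
    rw [uIcc_of_le haR] at hr
    have : 0 < r := lt_of_lt_of_le ha hr.1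
    have h : (R ^ 2)⁻¹ ≤ (r ^ 2)⁻¹ := by
      have := hr.2
      gcongr
    simp only [min_eq_right h]
  have h2 : ∫ r in R..1, r * min ((r ^ 2)⁻¹) ((R ^ 2)⁻¹) = ∫ r in R..1, r⁻¹ := by
    apply intervalIntegral.integral_congr
    intro r hr
    rw [uIcc_of_le hR] at hr
    have h0 : 0 < r := lt_of_lt_of_le hR0 hr.1
    have h : (r ^ 2)⁻¹ ≤ (R ^ 2)⁻¹ := by
      have := hr.1
      gcongr
    simp only [min_eq_left h]
    field_simp
  rw [h1, h2, intervalIntegral.integral_mul_const, integral_id,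
    integral_inv_of_pos hR0 one_pos, one_div, Real.log_inv]
  ring

theorem statement4 (a δ : ℝ) (ha0 : 0 < a) (ha1 : a < 1) (hδ : 0 < δ)
    (hcond : a ^ 2 + 48 * δ / π ≤ 1)
    (S : Set (ℝ × ℝ))
    (hS : S = {p : ℝ × ℝ | ∃ r θ : ℝ, a ≤ r ∧ r ≤ 1 ∧ π / 6 ≤ θ ∧ θ ≤ π / 3 ∧
        p = (r * Real.cos θ, r * Real.sin θ)})
    (E : Set (ℝ × ℝ)) (hEmeas : MeasurableSet E) (hES : E ⊆ S)
    (hEvol : volume E ≤ ENNReal.ofReal (4 * δ)) :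
    π / 12 * (-Real.log (a ^ 2 + 48 * δ / π)) ≤
      ∫ y in S \ E, (y.1 ^ 2 + y.2 ^ 2)⁻¹ := by
  have hpi := Real.pi_pos
  set K : Set (ℝ × ℝ) := Icc a 1 ×ˢ Icc (π / 6) (π / 3) with hK
  have hSK : S = polarCoord.symm '' K := by
    rw [hS]
    ext p
    constructor
    · rintro ⟨r, θ, h1, h2, h3, h4, rfl⟩
      exact ⟨(r, θ), ⟨⟨h1, h2⟩, ⟨h3, h4⟩⟩, rfl⟩
    · rintro ⟨⟨r, θ⟩, ⟨⟨h1, h2⟩, ⟨h3, h4⟩⟩, rfl⟩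
      exact ⟨r, θ, h1, h2, h3, h4, rfl⟩
  have hKT : K ⊆ polarCoord.target := by
    rintro ⟨r, θ⟩ ⟨⟨h1, h2⟩, ⟨h3, h4⟩⟩
    simp only at h1 h2 h3 h4
    refine ⟨?_, ?_, ?_⟩
    · exact lt_of_lt_of_le ha0 h1
    · show -π < θ
      linarith
    · show θ < π
      linarith
  have hKm : MeasurableSet K := measurableSet_Icc.prod measurableSet_Icc
  have hSc : IsCompact S := by
    rw [hSK]
    exact (isCompact_Icc.prod isCompact_Icc).image continuous_polarCoord_symm
  have hSm : MeasurableSet S := hSc.measurableSet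
  obtain ⟨R, hRpos, hR2⟩ : ∃ R : ℝ, 0 < R ∧ R ^ 2 = a ^ 2 + 48 * δ / π :=
    ⟨√(a ^ 2 + 48 * δ / π), by positivity, Real.sq_sqrt (by positivity)⟩
  have haR : a ≤ R := by
    have : 0 < 48 * δ / π := by positivity
    nlinarith
  have hR1 : R ≤ 1 := by nlinarith
  rw [← hR2]
  have hSpos : ∀ y ∈ S, 0 < y.1 ^ 2 + y.2 ^ 2 := by
    intro y hy
    rw [hS] at hy
    obtain ⟨r, θ, h1, h2, h3, h4, rfl⟩ := hy
    have : (r * cos θ) ^ 2 + (r * sin θ) ^ 2 = r ^ 2 := by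
      linear_combination r ^ 2 * Real.sin_sq_add_cos_sq θ
    simp only [this]
    have : 0 < r := by linarith
    positivity
  set f : ℝ × ℝ → ℝ := fun y => (y.1 ^ 2 + y.2 ^ 2)⁻¹ with hf
  set g : ℝ × ℝ → ℝ := fun y => min (y.1 ^ 2 + y.2 ^ 2)⁻¹ ((R ^ 2)⁻¹) with hg
  have hfc : ContinuousOn f S :=
    ContinuousOn.inv₀ (by fun_prop) fun y hy => (hSpos y hy).ne'
  have hfi : IntegrableOn f S := hfc.integrableOn_compact hSc
  have hgi : IntegrableOn g S :=
    (ContinuousOn.inf hfc continuousOn_const).integrableOn_compact hSc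
  have hfg : ∫ y in S \ E, g y ≤ ∫ y in S \ E, f y :=
    integral_mono (hgi.mono_set sdiff_subset) (hfi.mono_set sdiff_subset)
      fun y => min_le_left _ _
  have hdiff : ∫ y in S \ E, g y = (∫ y in S, g y) - ∫ y in E, g y :=
    setIntegral_sdiff hEmeas hgi hES
  have hEfin : volume E ≠ ⊤ := (hEvol.trans_lt ENNReal.ofReal_lt_top).ne
  have hEg : ∫ y in E, g y ≤ 4 * δ * (R ^ 2)⁻¹ := by
    calc ∫ y in E, g y ≤ ∫ y in E, (R ^ 2)⁻¹ :=
          integral_mono (hgi.mono_set hES) (integrableOn_const hEfin)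
            fun y => min_le_right _ _
      _ = volume.real E * (R ^ 2)⁻¹ := by rw [setIntegral_const, smul_eq_mul]
      _ ≤ 4 * δ * (R ^ 2)⁻¹ := by
          gcongr
          exact ENNReal.toReal_le_of_le_ofReal (by positivity) hEvol
  have hSg : ∫ y in S, g y =
      ((R ^ 2)⁻¹ * ((R ^ 2 - a ^ 2) / 2) - Real.log R) * (π / 6) := by
    rw [← integral_indicator hSm, ← integral_comp_polarCoord_symm]
    have : ∀ p ∈ polarCoord.target, p.1 • S.indicator g (polarCoord.symm p) =
        K.indicator (fun p => (p.1 * min ((p.1 ^ 2)⁻¹) ((R ^ 2)⁻¹)) * 1) p := by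
      intro p hp
      by_cases hpK : p ∈ K
      · have : polarCoord.symm p ∈ S := hSK ▸ mem_image_of_mem _ hpK
        rw [indicator_of_mem this, indicator_of_mem hpK]
        have h : (p.1 * cos p.2) ^ 2 + (p.1 * sin p.2) ^ 2 = p.1 ^ 2 := by
          linear_combination p.1 ^ 2 * Real.sin_sq_add_cos_sq p.2
        simp [hg, polarCoord_symm_apply, h]
      · have : polarCoord.symm p ∉ S := by
          rw [hSK]
          rintro ⟨q, hq, hqp⟩
          exact hpK (polarCoord.symm.injOn (hKT hq) hp hqp ▸ hq)
        rw [indicator_of_notMem this, indicator_of_notMem hpK, smul_zero]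
    rw [setIntegral_congr_fun polarCoord.open_target.measurableSet this,
      setIntegral_indicator hKm, inter_eq_self_of_subset_right hKT, hK,
      Measure.volume_eq_prod,
      setIntegral_prod_mul (fun r : ℝ => r * min ((r ^ 2)⁻¹) ((R ^ 2)⁻¹)) (fun _ : ℝ => (1 : ℝ)),
      integral_Icc_eq_integral_Ioc, ← intervalIntegral.integral_of_le ha1.le,
      radial_aux a R ha0 haR hR1, setIntegral_const]
    congr 1
    rw [Real.volume_real_Icc_of_le (by linarith)]
    simp
    ring
  have hlog : Real.log (R ^ 2) = 2 * Real.log R := by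
    rw [Real.log_pow]; norm_num
  have hRd : R ^ 2 - a ^ 2 = 48 * δ / π := by linarith
  have key : (R ^ 2)⁻¹ * ((R ^ 2 - a ^ 2) / 2) * (π / 6) = 4 * δ * (R ^ 2)⁻¹ := by
    rw [hRd]; field_simp; norm_num
  rw [hlog]
  linarith [hfg, hdiff, hEg, hSg, key]
end
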